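/- arXiv:1904.01788 — 7 statements merged into one kernel-verified Lean document; each statement's English description precedes it below -/
import Mathlib

section
/- The map τ ↦ F_τ, sending a matrix τ to the column span of the (2d)×d block matrix (τ; 1_d), is a bijection from the Siegel half space H_d onto the set D_Ψ. (This is the parametrisation of polarised Hodge structures of type {(-1,0),(0,-1)} on ℤ^{2d} by the Siegel half space, Section 4.2 of the paper.) -/
open Matrix Complex

noncomputable section

/-- `ℂ^{2d}`, with the first `d` coordinates indexed by `Sum.inl` and the
last `d` coordinates indexed by `Sum.inr`. -/
abbrev Vd (d : ℕ) := (Fin d ⊕ Fin d) → ℂ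

/-- The matrix `J = [[0, -1_d],[1_d, 0]]`. -/
def Jmat (d : ℕ) : Matrix (Fin d ⊕ Fin d) (Fin d ⊕ Fin d) ℝ :=
  Matrix.fromBlocks 0 (-1) 1 0

/-- The bilinear form `ω(x,y) = xᵀ · J · y` on `ℂ^{2d}`. -/
def omegaC (d : ℕ) (x y : Vd d) : ℂ :=
  x ⬝ᵥ (((Jmat d).map (fun r : ℝ => (r : ℂ))) *ᵥ y)

/-- The set `D_Ψ` of `d`-dimensional subspaces `F ⊆ ℂ^{2d}` on which `ω` vanishes
identically and such that `i·ω(v, v̄)` is a positive real number for all nonzero `v ∈ F`. -/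
def DPsi (d : ℕ) : Set (Submodule ℂ (Vd d)) :=
  {F | Module.finrank ℂ F = d ∧
       (∀ x ∈ F, ∀ y ∈ F, omegaC d x y = 0) ∧
       (∀ v ∈ F, v ≠ 0 →
         ∃ r : ℝ, 0 < r ∧
           Complex.I * omegaC d v (fun i => (starRingEnd ℂ) (v i)) = (r : ℂ))}

/-- The `2d × d` block matrix `(τ; 1_d)`. -/
def blockTau (d : ℕ) (τ : Matrix (Fin d) (Fin d) ℂ) :
    Matrix (Fin d ⊕ Fin d) (Fin d) ℂ :=
  Matrix.of fun i j =>
    Sum.elim (fun i' => τ i' j) (fun i' => if i' = j then (1 : ℂ) else 0) i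

/-- `F_τ ⊆ ℂ^{2d}`, the column span of `(τ; 1_d)`, i.e. `{(τv, v) : v ∈ ℂ^d}`. -/
def Ftau (d : ℕ) (τ : Matrix (Fin d) (Fin d) ℂ) : Submodule ℂ (Vd d) :=
  LinearMap.range (blockTau d τ).mulVecLin

/-- The Siegel half space `H_d`: symmetric complex matrices with positive definite
imaginary part. -/
def Siegel (d : ℕ) : Set (Matrix (Fin d) (Fin d) ℂ) :=
  {τ | τᵀ = τ ∧ (τ.map Complex.im).PosDef}

/-!
For `v = (τu, u)` and `w = (τu', u')` in `F_τ` one has `ω(v, w) = uᵀ(τ - τᵀ)u'` and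
`i·ω(v, v̄) = u*·i(τ* - τ)·u`. Hence `F_τ` is isotropic exactly when `τ` is symmetric, in which case
`i(τ* - τ) = 2 Im τ`, so `F_τ` lies in `D_Ψ` exactly when `τ` lies in `H_d`. Since `F_τ` is the
graph of `τ`, it determines `τ`. Conversely, if `v ∈ F ∈ D_Ψ` has vanishing last `d` coordinates, so
does `v̄`, whence `ω(v, v̄) = 0` and `v = 0`; by dimension `F` is then the graph of a matrix.
-/

section Matrices

variable {m n 𝕜 R : Type*} [RCLike 𝕜]

lemma forall_dotProduct_mulVec_eq_zero_iff [Fintype m] [Fintype n] [CommSemiring R]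
    {M : Matrix m n R} :
    (∀ u w, u ⬝ᵥ M *ᵥ w = 0) ↔ M = 0 := by
  classical
  refine ⟨fun h => ext_of_mulVec_single fun j => ?_, fun h => by simp [h]⟩
  rw [zero_mulVec]
  exact dotProduct_eq_zero _ fun u => (dotProduct_comm _ _).trans (h u _)

lemma isHermitian_map_ofReal_iff {M : Matrix n n ℝ} :
    (M.map ((↑) : ℝ → 𝕜)).IsHermitian ↔ M.IsHermitian := by
  simp [← Matrix.ext_iff, Matrix.IsHermitian]

lemma re_star_dotProduct_map_ofReal_mulVec [Fintype n] (M : Matrix n n ℝ) (u : n → 𝕜) :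
    RCLike.re (star u ⬝ᵥ M.map ((↑) : ℝ → 𝕜) *ᵥ u) =
      (RCLike.re ∘ u) ⬝ᵥ M *ᵥ (RCLike.re ∘ u) + (RCLike.im ∘ u) ⬝ᵥ M *ᵥ (RCLike.im ∘ u) := by
  simp [dotProduct, mulVec, Finset.mul_sum, Finset.sum_add_distrib]

open scoped ComplexOrder

lemma posDef_map_ofReal_iff [Finite n] {M : Matrix n n ℝ} :
    (M.map ((↑) : ℝ → 𝕜)).PosDef ↔ M.PosDef := by
  have := Fintype.ofFinite n
  simp only [posDef_iff_dotProduct_mulVec, isHermitian_map_ofReal_iff, star_trivial]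
  refine and_congr_right fun hM => ⟨fun h a ha => ?_, fun h u hu => ?_⟩
  · have hne : ((↑) : ℝ → 𝕜) ∘ a ≠ 0 := fun h0 => ha <| funext fun i => by
      simpa using congrFun h0 i
    have hre := (RCLike.pos_iff.1 (h hne)).1
    rw [re_star_dotProduct_map_ofReal_mulVec] at hre
    simpa [Function.comp_def, dotProduct] using hre
  · have nonneg (a : n → ℝ) : 0 ≤ a ⬝ᵥ M *ᵥ a := by
      obtain rfl | ha := eq_or_ne a 0
      · simp
      · exact (h ha).le
    refine RCLike.pos_iff.2
      ⟨?_, (isHermitian_map_ofReal_iff.2 hM).im_star_dotProduct_mulVec_self u⟩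
    rw [re_star_dotProduct_map_ofReal_mulVec]
    by_cases hre : RCLike.re ∘ u = 0
    · have him : RCLike.im ∘ u ≠ 0 := fun him => hu <| funext fun i =>
        RCLike.ext (by simpa using congrFun hre i) (by simpa using congrFun him i)
      exact add_pos_of_nonneg_of_pos (nonneg _) (h him)
    · exact add_pos_of_pos_of_nonneg (h hre) (nonneg _)

lemma posDef_smul_iff {c : ℝ} (hc : 0 < c) {M : Matrix n n 𝕜} :
    (c • M).PosDef ↔ M.PosDef :=
  ⟨fun h => by simpa [smul_smul, hc.ne'] using h.smul (inv_pos.2 hc), fun h => h.smul hc⟩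

lemma I_smul_conjTranspose_sub_self_of_isSymm {τ : Matrix n n ℂ} (hτ : τ.IsSymm) :
    I • (τᴴ - τ) = (2 : ℝ) • (τ.map im).map ((↑) : ℝ → ℂ) := by
  ext i j
  have hij : τ j i = τ i j := hτ.apply i j
  have him : I * (star (τ i j) - τ i j) = (2 * (τ i j).im : ℝ) := by
    rw [star_def, ← neg_sub, sub_conj, ofReal_mul, ofReal_ofNat]
    linear_combination (-2 * (τ i j).im : ℂ) * I_mul_I
  simpa [hij] using him

lemma isHermitian_I_smul_conjTranspose_sub_self (τ : Matrix n n ℂ) :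
    (I • (τᴴ - τ)).IsHermitian := by
  rw [Matrix.IsHermitian, conjTranspose_smul, conjTranspose_sub, conjTranspose_conjTranspose,
    ← neg_sub τᴴ τ, smul_neg, ← neg_smul]
  simp

lemma posDef_I_smul_conjTranspose_sub_self_iff [Finite n] {τ : Matrix n n ℂ} (hτ : τ.IsSymm) :
    (I • (τᴴ - τ)).PosDef ↔ (τ.map im).PosDef := by
  rw [I_smul_conjTranspose_sub_self_of_isSymm hτ, posDef_smul_iff two_pos]
  exact posDef_map_ofReal_iff

end Matrices

section SiegelDomain

variable {d : ℕ} {τ : Matrix (Fin d) (Fin d) ℂ}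

lemma omegaC_eq_sub (x y : Vd d) :
    omegaC d x y = (x ∘ Sum.inr) ⬝ᵥ (y ∘ Sum.inl) - (x ∘ Sum.inl) ⬝ᵥ (y ∘ Sum.inr) := by
  have hJ : (Jmat d).map ((↑) : ℝ → ℂ) = fromBlocks 0 (-1) 1 0 := by
    simp [Jmat, fromBlocks_map, Matrix.map_neg, Matrix.map_one]
  rw [omegaC, hJ, fromBlocks_mulVec, dotProduct_block]
  simp only [Sum.elim_comp_inl, Sum.elim_comp_inr, zero_mulVec, neg_mulVec, one_mulVec, zero_add,
    add_zero, dotProduct_neg]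
  ring

lemma omegaC_star_eq_zero {v : Vd d} (hinr : v ∘ Sum.inr = 0) : omegaC d v (star v) = 0 := by
  have hstar : star v ∘ Sum.inr = 0 := (congrArg star hinr).trans (star_zero _)
  rw [omegaC_eq_sub, hinr, hstar, zero_dotProduct, dotProduct_zero, sub_zero]

lemma blockTau_mulVec (u : Fin d → ℂ) : blockTau d τ *ᵥ u = Sum.elim (τ *ᵥ u) u := by
  have hblock : blockTau d τ = fromRows τ 1 := by
    ext (i | i) j <;> simp [blockTau, one_apply]
  rw [hblock, fromRows_mulVec, one_mulVec]

lemma mem_Ftau {v : Vd d} : v ∈ Ftau d τ ↔ τ *ᵥ (v ∘ Sum.inr) = v ∘ Sum.inl := by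
  simp only [Ftau, LinearMap.mem_range, mulVecLin_apply, blockTau_mulVec]
  constructor
  · rintro ⟨u, rfl⟩
    simp
  · intro h
    exact ⟨v ∘ Sum.inr, by rw [h, Sum.elim_comp_inl_inr]⟩

lemma forall_mem_Ftau {p : Vd d → Prop} :
    (∀ v ∈ Ftau d τ, p v) ↔ ∀ u, p (Sum.elim (τ *ᵥ u) u) := by
  simp [Ftau, blockTau_mulVec]

lemma Ftau_injective : Function.Injective (Ftau d) := by
  intro τ₁ τ₂ h
  refine ext_of_mulVec_single fun j => ?_
  have hmem : Sum.elim (τ₁ *ᵥ Pi.single j 1) (Pi.single j 1) ∈ Ftau d τ₂ :=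
    h ▸ mem_Ftau.2 rfl
  exact (mem_Ftau.1 hmem).symm

lemma finrank_Ftau : Module.finrank ℂ (Ftau d τ) = d := by
  have hinj : Function.Injective (blockTau d τ).mulVecLin := fun u w h => by
    simpa [blockTau_mulVec] using congrArg (· ∘ Sum.inr) h
  rw [Ftau, LinearMap.finrank_range_of_inj hinj, Module.finrank_fin_fun]

lemma exists_Ftau_eq {F : Submodule ℂ (Vd d)} (hdim : Module.finrank ℂ F = d)
    (hF : ∀ v ∈ F, v ∘ Sum.inr = 0 → v = 0) : ∃ τ, Ftau d τ = F := by
  let p : F →ₗ[ℂ] Fin d → ℂ := LinearMap.funLeft ℂ ℂ Sum.inr ∘ₗ F.subtype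
  have hp : LinearMap.ker p = ⊥ :=
    LinearMap.ker_eq_bot'.2 fun v hv => Subtype.ext (hF v v.2 hv)
  obtain ⟨g, hg⟩ := p.exists_leftInverse_of_injective hp
  let f : (Fin d → ℂ) →ₗ[ℂ] Fin d → ℂ := LinearMap.funLeft ℂ ℂ Sum.inl ∘ₗ F.subtype ∘ₗ g
  have hle : F ≤ Ftau d (LinearMap.toMatrix' f) := fun v hv => by
    have hgv : g (v ∘ Sum.inr) = ⟨v, hv⟩ := LinearMap.congr_fun hg ⟨v, hv⟩
    rw [mem_Ftau, LinearMap.toMatrix'_mulVec]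
    change (g (v ∘ Sum.inr) : Vd d) ∘ Sum.inl = v ∘ Sum.inl
    rw [hgv]
  exact ⟨_, (Submodule.eq_of_le_of_finrank_eq hle (hdim.trans finrank_Ftau.symm)).symm⟩

lemma omegaC_sumElim_mulVec (u w : Fin d → ℂ) :
    omegaC d (Sum.elim (τ *ᵥ u) u) (Sum.elim (τ *ᵥ w) w) = u ⬝ᵥ (τ - τᵀ) *ᵥ w := by
  rw [omegaC_eq_sub, sub_mulVec, dotProduct_sub, dotProduct_mulVec u τᵀ, vecMul_transpose]
  simp

lemma I_mul_omegaC_star_sumElim_mulVec (u : Fin d → ℂ) :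
    I * omegaC d (Sum.elim (τ *ᵥ u) u) (star (Sum.elim (τ *ᵥ u) u)) =
      star u ⬝ᵥ (I • (τᴴ - τ)) *ᵥ u := by
  have hinl : u ⬝ᵥ star (τ *ᵥ u) = star u ⬝ᵥ τᴴ *ᵥ u := by
    rw [dotProduct_comm, star_mulVec, dotProduct_mulVec]
  rw [omegaC_eq_sub, smul_mulVec, dotProduct_smul, sub_mulVec, dotProduct_sub, ← hinl,
    dotProduct_comm (star u)]
  rfl

lemma isotropic_Ftau_iff :
    (∀ x ∈ Ftau d τ, ∀ y ∈ Ftau d τ, omegaC d x y = 0) ↔ τ.IsSymm := by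
  simp only [forall_mem_Ftau, omegaC_sumElim_mulVec, forall_dotProduct_mulVec_eq_zero_iff,
    sub_eq_zero, Matrix.IsSymm, eq_comm]

open scoped ComplexOrder

lemma mem_DPsi_iff {F : Submodule ℂ (Vd d)} :
    F ∈ DPsi d ↔ Module.finrank ℂ F = d ∧ (∀ x ∈ F, ∀ y ∈ F, omegaC d x y = 0) ∧
      ∀ v ∈ F, v ≠ 0 → 0 < I * omegaC d v (star v) := by
  refine and_congr_right' (and_congr_right' (forall₃_congr fun v _ _ => ?_))
  rw [RCLike.pos_iff_exists_ofReal]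
  exact exists_congr fun r => and_congr_right' eq_comm

lemma positive_Ftau_iff :
    (∀ v ∈ Ftau d τ, v ≠ 0 → 0 < I * omegaC d v (star v)) ↔ (I • (τᴴ - τ)).PosDef := by
  have hne (u : Fin d → ℂ) : Sum.elim (τ *ᵥ u) u ≠ 0 ↔ u ≠ 0 := by
    refine not_congr ⟨fun h => congrArg (· ∘ Sum.inr) h, ?_⟩
    rintro rfl
    simp
  simp only [forall_mem_Ftau, hne, I_mul_omegaC_star_sumElim_mulVec, posDef_iff_dotProduct_mulVec,
    isHermitian_I_smul_conjTranspose_sub_self, true_and]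

lemma Ftau_mem_DPsi_iff : Ftau d τ ∈ DPsi d ↔ τ ∈ Siegel d := by
  rw [mem_DPsi_iff, isotropic_Ftau_iff, positive_Ftau_iff]
  simp only [finrank_Ftau, true_and]
  exact and_congr_right posDef_I_smul_conjTranspose_sub_self_iff

lemma eq_zero_of_mem_DPsi {F : Submodule ℂ (Vd d)} (hF : F ∈ DPsi d) {v : Vd d} (hv : v ∈ F)
    (hinr : v ∘ Sum.inr = 0) : v = 0 := by
  by_contra hne
  have hpos := (mem_DPsi_iff.1 hF).2.2 v hv hne
  rw [omegaC_star_eq_zero hinr, mul_zero] at hpos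
  exact hpos.false

end SiegelDomain

/-- The map `τ ↦ F_τ` is a bijection from the Siegel half space `H_d` onto `D_Ψ`. -/
theorem siegel_to_DPsi_bijective (d : ℕ) (hd : 1 ≤ d) :
    (∀ τ ∈ Siegel d, Ftau d τ ∈ DPsi d) ∧
    (∀ τ₁ ∈ Siegel d, ∀ τ₂ ∈ Siegel d, Ftau d τ₁ = Ftau d τ₂ → τ₁ = τ₂) ∧
    (∀ F ∈ DPsi d, ∃ τ ∈ Siegel d, Ftau d τ = F) := by
  refine ⟨fun τ hτ => Ftau_mem_DPsi_iff.2 hτ, fun _ _ _ _ h => Ftau_injective h, fun F hF => ?_⟩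
  obtain ⟨τ, rfl⟩ := exists_Ftau_eq hF.1 fun _ hv => eq_zero_of_mem_DPsi hF hv
  exact ⟨τ, Ftau_mem_DPsi_iff.1 hF, rfl⟩
end
end

section
/- Let τ ∈ M_d(ℂ) be symmetric. Suppose f_ℂ ∈ M_d(ℂ) and α, β, γ, δ ∈ M_d(ℂ) satisfy 2πi·f_ℂ·τ = α − τ·γ and 2πi·f_ℂ = β − τ·δ. Define f'_ℂ := (2πi)^{-1}·(−γᵀ + τ·δᵀ) and α' := −αᵀ, β' := −γᵀ, γ' := −βᵀ, δ' := −δᵀ (that is, the block matrix [[α',β'],[γ',δ']] is −f_ℤᵀ where f_ℤ = [[α,β],[γ,δ]]). Then the same two relations hold for the primed data: 2πi·f'_ℂ·τ = α' − τ·γ' and 2πi·f'_ℂ = β' − τ·δ'. (This is the matrix content of Proposition 4.3 of the paper: the dual of the homomorphism of complex tori B_τ → A_τ determined by (f_ℂ, f_ℤ) is determined by ((2πi)^{-1}(−γᵀ + τδᵀ), −f_ℤᵀ).) -/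
open Matrix Complex

noncomputable section

/-- The scalar `2πi`. -/
def twoPiI : ℂ := 2 * (Real.pi : ℂ) * Complex.I

/-- The matrix `f'_ℂ = (2πi)⁻¹ · (−γᵀ + τ·δᵀ)` of the dual homomorphism. -/
def fdual (d : ℕ) (τ γ δ : Matrix (Fin d) (Fin d) ℂ) : Matrix (Fin d) (Fin d) ℂ :=
  twoPiI⁻¹ • (-γᵀ + τ * δᵀ)

/-!
Since `2πi` is invertible, the second relation determines `f_ℂ`, and the first then becomes
`α - τγ - βτ + τδτ = 0`, that is `[1, -τ] f_ℤ [1, -τ]ᵀ = 0` for symmetric `τ`. Transposing this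
equation exchanges `f_ℤ` and `f_ℤᵀ`, and changing the sign of `f_ℤ` does not affect it.

For `f : B_τ → A_σ` the equation is `α - σγ - βτ + σδτ = 0`, and transposing it exchanges `σ` and
`τᵀ`, so the dual relations hold with `(τᵀ, σᵀ)` in place of `(σ, τ)`.
-/

section Relations

variable {G R k l m p : Type*} [Group G] [Fintype k]

theorem smul_mul_eq_and_smul_eq_iff [NonUnitalNonAssocSemiring R] [DistribMulAction G R]
    [IsScalarTower G R R] {c : G} {f B : Matrix m k R} {τ : Matrix k l R} {A : Matrix m l R} :
    c • (f * τ) = A ∧ c • f = B ↔ f = c⁻¹ • B ∧ B * τ = A := by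
  rw [eq_inv_smul_iff, and_comm, ← Matrix.smul_mul]
  exact and_congr_right fun hf ↦ by rw [hf]

variable [NonUnitalCommRing R] [Fintype p] {σ : Matrix m p R} {τ : Matrix k l R}
  {α : Matrix m l R} {β : Matrix m k R} {γ : Matrix p l R} {δ : Matrix p k R}

theorem sub_mul_mul_eq_sub_mul_iff_neg_transpose :
    (β - σ * δ) * τ = α - σ * γ ↔ (-γᵀ - τᵀ * -δᵀ) * σᵀ = -αᵀ - τᵀ * -βᵀ := by
  calc
    (β - σ * δ) * τ = α - σ * γ
    _ ↔ τᵀ * βᵀ - τᵀ * δᵀ * σᵀ = αᵀ - γᵀ * σᵀ := by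
      rw [← transpose_inj]
      simp only [transpose_mul, transpose_sub, Matrix.mul_sub, Matrix.mul_assoc]
    _ ↔ -(γᵀ * σᵀ) + τᵀ * δᵀ * σᵀ = -αᵀ + τᵀ * βᵀ := by grind
    _ ↔ (-γᵀ - τᵀ * -δᵀ) * σᵀ = -αᵀ - τᵀ * -βᵀ := by
      simp only [Matrix.add_mul, Matrix.mul_neg, Matrix.neg_mul, sub_neg_eq_add]

theorem dual_homomorphism_relations_general [DistribMulAction G R] [IsScalarTower G R R]
    {c : G} {f : Matrix m k R}
    (h1 : c • (f * τ) = α - σ * γ) (h2 : c • f = β - σ * δ) :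
    c • ((c⁻¹ • (-γᵀ + τᵀ * δᵀ)) * σᵀ) = -αᵀ - τᵀ * -βᵀ ∧
      c • c⁻¹ • (-γᵀ + τᵀ * δᵀ) = -γᵀ - τᵀ * -δᵀ := by
  have hsign : -γᵀ + τᵀ * δᵀ = -γᵀ - τᵀ * -δᵀ := by rw [Matrix.mul_neg, sub_neg_eq_add]
  have heliminated : (β - σ * δ) * τ = α - σ * γ :=
    (smul_mul_eq_and_smul_eq_iff.mp ⟨h1, h2⟩).2
  rw [hsign]
  exact smul_mul_eq_and_smul_eq_iff.mpr
    ⟨rfl, sub_mul_mul_eq_sub_mul_iff_neg_transpose.mp heliminated⟩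

end Relations

theorem twoPiI_ne_zero : twoPiI ≠ 0 := two_pi_I_ne_zero

/-- Proposition 4.3 (matrix content): if `(f_ℂ, [[α,β],[γ,δ]])` satisfies the
compatibility relations `2πi·f_ℂ·τ = α − τ·γ` and `2πi·f_ℂ = β − τ·δ` for a symmetric
`τ`, then the primed data `f'_ℂ = (2πi)⁻¹(−γᵀ + τδᵀ)` and
`[[α',β'],[γ',δ']] = [[−αᵀ,−γᵀ],[−βᵀ,−δᵀ]] = −[[α,β],[γ,δ]]ᵀ` satisfy the same two
relations. -/
theorem dual_homomorphism_relations (d : ℕ)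
    (τ f α β γ δ : Matrix (Fin d) (Fin d) ℂ)
    (hτ : τᵀ = τ)
    (h1 : twoPiI • (f * τ) = α - τ * γ)
    (h2 : twoPiI • f = β - τ * δ) :
    twoPiI • (fdual d τ γ δ * τ) = (-αᵀ) - τ * (-βᵀ) ∧
    twoPiI • fdual d τ γ δ = (-γᵀ) - τ * (-δᵀ) := by
  have h := dual_homomorphism_relations_general (c := Units.mk0 twoPiI twoPiI_ne_zero) h1 h2
  rwa [hτ] at h
end
end

section
/- Let d ≥ 1, f ∈ M_{2d}(ℤ) with det(f + fᵀ) ≠ 0, and let x ∈ ℝ^{2d} be a row vector with coordinates x₁, …, x_{2d} such that the 2d+2 real numbers 1, x₁, …, x_{2d}, x·f·xᵀ are linearly independent over ℚ. Let v := (x·f·xᵀ, (f+fᵀ)·xᵀ) ∈ ℝ^{2d+1}. Then the set {m·v + k : m ∈ ℤ, k ∈ ℤ^{2d+1}} is dense in ℝ^{2d+1}; equivalently, the cyclic subgroup of the torus ℝ^{2d+1}/ℤ^{2d+1} generated by the class of v is dense. (This is the density claim of Remark 5.4(2) of the paper, showing that the multiples of the Ribet section are dense in a codimension-one circle bundle,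 so that the image of the Ribet section is not contained in a torsion translate of a proper subgroup scheme.) -/
open Matrix

noncomputable section

/-!
Rotation of the torus by `g` multiplies the `n`-th Fourier coefficient of a function by the value
at `g` of the `n`-th character. If no nontrivial character is trivial at `g`, then an invariant
`L²` function has only its zeroth coefficient, so the rotation is ergodic and the multiples of `g`
are dense. For `g` the class of `v`, a character trivial at `g` is an integer relation between `1`
and the coordinates of `v`; this gives Kronecker's theorem. It applies to `v = (q, B x)` with
`det B ≠ 0` when `1`, `q` and the coordinates of `x` are independent, because a nonsingular matrix
preserves linear independence.
-/

open MeasureTheory Filter UnitAddTorus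
open scoped Real

-- The Fourier series of Mathlib refer to the probability measure on `ℝ / ℤ` given by these local
-- instances, not to the global one.
attribute [local instance] instMeasureSpaceUnitAddCircle instIsAddHaarMeasureUnitAddCircleVolume
  instIsProbabilityMeasureUnitAddCircleVolume

section Fourier

variable {ι : Type*} [Fintype ι]

lemma mFourier_apply_add (n : ι → ℤ) (s t : UnitAddTorus ι) :
    mFourier n (s + t) = mFourier n s * mFourier n t := by
  simp only [mFourier, ContinuousMap.coe_mk, ← Finset.prod_mul_distrib]
  refine Finset.prod_congr rfl fun i _ => ?_
  rw [Pi.add_apply, fourier_apply, smul_add, AddCircle.toCircle_add, Circle.coe_mul,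
    fourier_apply, fourier_apply]

lemma mFourier_neg_mul_mFourier (n : ι → ℤ) (t : UnitAddTorus ι) :
    mFourier (-n) t * mFourier n t = 1 := by
  rw [← mFourier_add, neg_add_cancel, mFourier_zero, ContinuousMap.one_apply]

lemma mFourierCoeff_comp_add_left {E : Type*} [NormedAddCommGroup E] [NormedSpace ℂ E]
    (f : UnitAddTorus ι → E) (g : UnitAddTorus ι) (n : ι → ℤ) :
    mFourierCoeff (fun t => f (g + t)) n = mFourier n g • mFourierCoeff f n := by
  calc ∫ t, mFourier (-n) t • f (g + t)
      = ∫ t, mFourier n g • mFourier (-n) (g + t) • f (g + t) := by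
        congr with t
        rw [smul_smul, mFourier_apply_add, ← mul_assoc, mul_comm (mFourier n g),
          mFourier_neg_mul_mFourier, one_mul]
    _ = mFourier n g • ∫ t, mFourier (-n) (g + t) • f (g + t) := integral_smul _ _
    _ = mFourier n g • ∫ t, mFourier (-n) t • f t := by
        rw [integral_add_left_eq_self (fun t => mFourier (-n) t • f t) g]

lemma ae_eq_const_of_mFourierCoeff_eq_zero {f : UnitAddTorus ι → ℂ} (hf : MemLp f 2)
    (hcoeff : ∀ n ≠ 0, mFourierCoeff f n = 0) : f =ᵐ[volume] fun _ => mFourierCoeff f 0 := by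
  have hcoeff_toLp (n : ι → ℤ) : mFourierCoeff (hf.toLp f) n = mFourierCoeff f n :=
    integral_congr_ae (by filter_upwards [hf.coeFn_toLp] with t ht; rw [ht])
  have hseries : hf.toLp f = mFourierCoeff f 0 • mFourierLp 2 0 := by
    have hsum := hasSum_mFourier_series_L2 (hf.toLp f)
    simp only [hcoeff_toLp] at hsum
    exact hsum.unique (hasSum_single 0 fun n hn => by rw [hcoeff n hn, zero_smul])
  calc f =ᵐ[volume] hf.toLp f := hf.coeFn_toLp.symm
    _ =ᵐ[volume] mFourierCoeff f 0 • ⇑(mFourierLp 2 0) := by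
      rw [hseries]; exact Lp.coeFn_smul _ _
    _ =ᵐ[volume] fun _ => mFourierCoeff f 0 := by
      filter_upwards [coeFn_mFourierLp 2 (0 : ι → ℤ)] with t ht
      rw [Pi.smul_apply, ht, mFourier_zero, ContinuousMap.one_apply, smul_eq_mul, mul_one]

theorem ergodic_add_left_of_mFourier_ne_one {g : UnitAddTorus ι}
    (hg : ∀ n ≠ 0, mFourier n g ≠ 1) : Ergodic (g + ·) := by
  refine ⟨measurePreserving_add_left volume g, ⟨fun s hs hgs => ?_⟩⟩
  set f : UnitAddTorus ι → ℂ := s.indicator fun _ => 1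
  have hinvariant : (fun t => f (g + t)) = f := congrArg (Set.indicator · fun _ => 1) hgs
  have hcoeff (n : ι → ℤ) (hn : n ≠ 0) : mFourierCoeff f n = 0 := by
    have hfixed := mFourierCoeff_comp_add_left f g n
    rw [hinvariant, smul_eq_mul] at hfixed
    by_contra hne
    exact hg n hn ((right_eq_mul₀ hne).mp hfixed)
  have hf : MemLp f 2 := memLp_indicator_const 2 hs 1 (.inr (measure_ne_top _ _))
  have hconst : EventuallyConst f (ae volume) :=
    (EventuallyConst.const _).congr (ae_eq_const_of_mFourierCoeff_eq_zero hf hcoeff).symm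
  exact hconst.of_indicator_const one_ne_zero

lemma mFourier_coe_apply (n : ι → ℤ) (v : ι → ℝ) :
    mFourier n (fun i => (v i : UnitAddCircle)) =
      Complex.exp ((∑ i, n i * v i : ℝ) * (2 * π * Complex.I)) := by
  simp only [mFourier, ContinuousMap.coe_mk, fourier_coe_apply, ← Complex.exp_sum]
  push_cast
  rw [Finset.sum_mul]
  exact congrArg _ (Finset.sum_congr rfl fun i _ => by ring)

lemma mFourier_coe_eq_one_iff (n : ι → ℤ) (v : ι → ℝ) :
    mFourier n (fun i => (v i : UnitAddCircle)) = 1 ↔ ∃ k : ℤ, ∑ i, n i * v i = k := by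
  rw [mFourier_coe_apply, Complex.exp_eq_one_iff]
  simp only [mul_left_inj' Complex.two_pi_I_ne_zero]
  norm_cast

end Fourier

section Kronecker

variable {ι : Type*}

lemma zsmul_coe_eq_coe_iff (v y : ι → ℝ) (m : ℤ) :
    m • (fun i => (v i : UnitAddCircle)) = (fun i => (y i : UnitAddCircle)) ↔
      ∃ k : ι → ℤ, y = fun i => m * v i + k i := by
  simp only [funext_iff, ← Classical.skolem (p := fun i (k : ℤ) => y i = m * v i + k)]
  refine forall_congr' fun i => ?_
  rw [Pi.smul_apply, ← AddCircle.coe_zsmul, eq_comm, ← sub_eq_zero, ← AddCircle.coe_sub,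
    AddCircle.coe_eq_zero_iff]
  simp only [zsmul_eq_mul, mul_one, eq_comm (b := y i - _), sub_eq_iff_eq_add']

theorem denseRange_zsmul_coe_of_linearIndependent [Finite ι] {v : ι → ℝ}
    (hv : LinearIndependent ℤ (Sum.elim (fun _ : Unit => (1 : ℝ)) v)) :
    DenseRange fun m : ℤ => m • (fun i => (v i : UnitAddCircle) : UnitAddTorus ι) := by
  cases nonempty_fintype ι
  refine .zsmul_of_ergodic_add_left (ergodic_add_left_of_mFourier_ne_one fun n hn hchar => hn ?_)
  obtain ⟨k, hk⟩ := (mFourier_coe_eq_one_iff n v).mp hchar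
  have hrelation := Fintype.linearIndependent_iff.mp hv (Sum.elim (fun _ => -k) n) (by simp [hk])
  exact funext fun i => hrelation (.inr i)

theorem dense_int_mul_add_int_of_linearIndependent [Finite ι] {v : ι → ℝ}
    (hv : LinearIndependent ℤ (Sum.elim (fun _ : Unit => (1 : ℝ)) v)) :
    Dense {y : ι → ℝ | ∃ (m : ℤ) (k : ι → ℤ), y = fun i => m * v i + k i} := by
  have hopen : IsOpenMap fun (y : ι → ℝ) i => (y i : UnitAddCircle) :=
    (IsOpenQuotientMap.piMap fun _ => QuotientAddGroup.isOpenQuotientMap_mk).isOpenMap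
  convert (denseRange_zsmul_coe_of_linearIndependent hv).preimage hopen using 1
  ext y
  simp only [Set.mem_ofPred_eq, Set.mem_preimage, Set.mem_range, zsmul_coe_eq_coe_iff]

end Kronecker

section MulVec

variable {l m n R S : Type*} [CommRing R] [CommRing S] [Algebra R S]

lemma linearIndependent_map_algebraMap_mulVec [Fintype n] {A : Matrix m n R} {w : n → S}
    (hA : LinearIndependent R A.row) (hw : LinearIndependent R w) :
    LinearIndependent R (A.map (algebraMap R S) *ᵥ w) := by
  have hcomb : A.map (algebraMap R S) *ᵥ w = Fintype.linearCombination R w ∘ A.row := by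
    ext i
    simp [mulVec, dotProduct, Fintype.linearCombination_apply, Algebra.smul_def]
  rw [hcomb]
  exact hA.map' _ (LinearMap.ker_eq_bot.mpr hw.fintypeLinearCombination_injective)

lemma fromBlocks_one_map_algebraMap_mulVec [Fintype l] [Fintype n] [DecidableEq l]
    (B : Matrix m n R) (u : l → S) (w : n → S) :
    (fromBlocks 1 0 0 B).map (algebraMap R S) *ᵥ Sum.elim u w =
      Sum.elim u (B.map (algebraMap R S) *ᵥ w) := by
  simp [fromBlocks_map, fromBlocks_mulVec]

lemma linearIndependent_sumElim_mulVec [IsDomain R] [Finite l] [Fintype m] [DecidableEq m]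
    {B : Matrix m m R} {u : l → S} {w : m → S} (hB : B.det ≠ 0)
    (huw : LinearIndependent R (Sum.elim u w)) :
    LinearIndependent R (Sum.elim u (B.map (algebraMap R S) *ᵥ w)) := by
  classical
  cases nonempty_fintype l
  have hdet : (fromBlocks (1 : Matrix l l R) 0 0 B).det ≠ 0 := by
    rwa [det_fromBlocks_zero₂₁, det_one, one_mul]
  rw [← fromBlocks_one_map_algebraMap_mulVec]
  exact linearIndependent_map_algebraMap_mulVec (linearIndependent_rows_of_det_ne_zero hdet) huw

end MulVec

theorem ribet_multiples_dense_general {ι : Type*} [Fintype ι] [DecidableEq ι]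
    (B : Matrix ι ι ℤ) (hB : B.det ≠ 0) (q : ℝ) (x : ι → ℝ)
    (hli : LinearIndependent ℚ
      (Sum.elim (fun _ : Unit => (1 : ℝ)) (Sum.elim (fun _ : Unit => q) x))) :
    Dense {y : Unit ⊕ ι → ℝ | ∃ (m : ℤ) (k : Unit ⊕ ι → ℤ),
      y = fun i => (m : ℝ) *
        Sum.elim (fun _ : Unit => q) ((B.map fun k : ℤ => (k : ℝ)) *ᵥ x) i + (k i : ℝ)} := by
  have hdet : (fromBlocks (1 : Matrix Unit Unit ℤ) 0 0 B).det ≠ 0 := by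
    rwa [det_fromBlocks_zero₂₁, det_one, one_mul]
  have hli_int := (LinearIndependent.iff_fractionRing ℤ ℚ).mpr hli
  have hblock := linearIndependent_sumElim_mulVec hdet hli_int
  rw [fromBlocks_one_map_algebraMap_mulVec] at hblock
  exact dense_int_mul_add_int_of_linearIndependent hblock

/-- Density claim of Remark 5.4(2): with `v = (x·f·xᵀ, (f+fᵀ)·xᵀ) ∈ ℝ^{2d+1}`,
the set `{m·v + k : m ∈ ℤ, k ∈ ℤ^{2d+1}}` is dense in `ℝ^{2d+1}`, provided
`det(f+fᵀ) ≠ 0` and the `2d+2` real numbers `1, x₁, …, x_{2d}, x·f·xᵀ` are linearly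
independent over `ℚ`.  Here `ℝ^{2d+1}` is indexed by `Unit ⊕ Fin (2d)`, the `Unit`
coordinate carrying `x·f·xᵀ`. -/
theorem ribet_multiples_dense (d : ℕ) (hd : 1 ≤ d)
    (f : Matrix (Fin (2 * d)) (Fin (2 * d)) ℤ)
    (hdet : (f + fᵀ).det ≠ 0)
    (x : Fin (2 * d) → ℝ)
    (hli : LinearIndependent ℚ
      (Sum.elim (fun _ : Unit => (1 : ℝ))
        (Sum.elim (fun _ : Unit => x ⬝ᵥ ((f.map fun k : ℤ => (k : ℝ)) *ᵥ x)) x))) :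
    Dense {y : Unit ⊕ Fin (2 * d) → ℝ |
      ∃ (m : ℤ) (k : Unit ⊕ Fin (2 * d) → ℤ),
        y = fun i =>
          (m : ℝ) * Sum.elim (fun _ : Unit => x ⬝ᵥ ((f.map fun k : ℤ => (k : ℝ)) *ᵥ x))
            (((f.map fun k : ℤ => (k : ℝ)) + (f.map fun k : ℤ => (k : ℝ))ᵀ) *ᵥ x) i
            + (k i : ℝ)} := by
  simpa only [Matrix.map_add _ Int.cast_add, transpose_map] using
    ribet_multiples_dense_general (f + fᵀ) hdet _ x hli
end
end

section
/- For all F and F' in D_Ψ there exists a real matrix g ∈ M_{2d}(ℝ) with gᵀ·J·g = J such that the ℂ-linear extension of g to ℂ^{2d} maps F onto F'. (This is the transitivity of the action of Sp(Ψ)(ℝ) on D_Ψ proved in Section 4.2 of the paper.) -/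
open Matrix Complex

noncomputable section

/-! A basis `E = X + iY` of `F ∈ D_Ψ`, arranged as the columns of a matrix, satisfies `Eᵀ J E = 0`.
Since `F` is positive, it can be chosen with `Eᴴ J E = 2i`. Adding and subtracting the two
relations yields `Xᵀ J E = i` and `Yᵀ J E = -1`, whose real and imaginary parts say that the real
matrix `[Y X]` is symplectic. As it sends the columns of `[i; 1]` to those of `E`, every point of
`D_Ψ` lies in the orbit of the one spanned by `[i; 1]`. -/

open scoped MatrixOrder ComplexOrder

section PositiveSubspaces

lemma exists_range_mulVecLin_eq_of_finrank_eq_card {m n K : Type*} [Finite m] [Fintype n]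
    [Field K] (F : Submodule K (m → K)) (hF : Module.finrank K F = Fintype.card n) :
    ∃ B : Matrix m n K, Function.Injective B.mulVec ∧ LinearMap.range B.mulVecLin = F := by
  classical
  let e : (n → K) ≃ₗ[K] F := LinearEquiv.ofFinrankEq _ _ (by simp [hF])
  have he : (LinearMap.toMatrix' (F.subtype ∘ₗ e.toLinearMap)).mulVecLin =
      F.subtype ∘ₗ e.toLinearMap := Matrix.toLin'_toMatrix' _
  refine ⟨LinearMap.toMatrix' (F.subtype ∘ₗ e.toLinearMap), ?_, ?_⟩
  · rw [← coe_mulVecLin, he]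
    exact F.subtype_injective.comp e.injective
  · rw [he, LinearEquiv.range_comp, Submodule.range_subtype]

variable {m n : Type*} [Fintype m] [Fintype n]

lemma transpose_mul_mul_eq_zero_of_forall_mem_range {R : Type*} [CommSemiring R]
    {M : Matrix m m R} {E : Matrix m n R}
    (h : ∀ x ∈ LinearMap.range E.mulVecLin, ∀ y ∈ LinearMap.range E.mulVecLin, x ⬝ᵥ M *ᵥ y = 0) :
    Eᵀ * M * E = 0 := by
  classical
  ext i j
  have hcol (k : n) : E.col k ∈ LinearMap.range E.mulVecLin :=
    ⟨Pi.single k 1, mulVec_single_one E k⟩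
  rw [Matrix.mul_assoc]
  exact h _ (hcol i) _ (hcol j)

variable {𝕜 : Type*} [RCLike 𝕜]

lemma exists_isUnit_conjTranspose_mul_mul_eq_one [DecidableEq n] {M : Matrix n n 𝕜}
    (hM : M.PosDef) : ∃ C : Matrix n n 𝕜, IsUnit C ∧ Cᴴ * M * C = 1 := by
  obtain ⟨B, hB, rfl⟩ :=
    CStarAlgebra.isStrictlyPositive_iff_eq_star_mul_self.mp hM.isStrictlyPositive
  have hBB : B * B⁻¹ = 1 := mul_nonsing_inv B ((isUnit_iff_isUnit_det B).mp hB)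
  refine ⟨B⁻¹, isUnit_nonsing_inv_iff.mpr hB, ?_⟩
  calc (B⁻¹)ᴴ * (Bᴴ * B) * B⁻¹ = (B * B⁻¹)ᴴ * (B * B⁻¹) := by
        simp only [conjTranspose_mul, Matrix.mul_assoc]
    _ = 1 := by rw [hBB, conjTranspose_one, Matrix.mul_one]

lemma exists_range_eq_and_conjTranspose_mul_mul_eq_one [DecidableEq n] {H : Matrix m m 𝕜}
    (hH : H.IsHermitian) (F : Submodule 𝕜 (m → 𝕜)) (hF : Module.finrank 𝕜 F = Fintype.card n)
    (hpos : ∀ v ∈ F, v ≠ 0 → 0 < star v ⬝ᵥ H *ᵥ v) :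
    ∃ E : Matrix m n 𝕜, LinearMap.range E.mulVecLin = F ∧ Eᴴ * H * E = 1 := by
  obtain ⟨B, hB, rfl⟩ := exists_range_mulVecLin_eq_of_finrank_eq_card (n := n) F hF
  have hgram : (Bᴴ * H * B).PosDef := by
    refine .of_dotProduct_mulVec_pos (isHermitian_conjTranspose_mul_mul B hH) fun z hz ↦ ?_
    have hBz : B *ᵥ z ≠ 0 := by simpa using hB.ne hz
    simpa [star_mulVec, dotProduct_mulVec, vecMul_vecMul, Matrix.mul_assoc] using
      hpos (B *ᵥ z) ⟨z, rfl⟩ hBz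
  obtain ⟨C, hC, hone⟩ := exists_isUnit_conjTranspose_mul_mul_eq_one hgram
  refine ⟨B * C, ?_, ?_⟩
  · rw [mulVecLin_mul, LinearMap.range_comp_of_range_eq_top]
    exact LinearMap.range_eq_top.mpr (mulVec_surjective_iff_isUnit.mpr hC)
  · simpa only [conjTranspose_mul, Matrix.mul_assoc] using hone

end PositiveSubspaces

section RealAndImaginaryParts

variable {l m n : Type*}

lemma map_re_map_ofReal_mul [Fintype m] (A : Matrix l m ℝ) (E : Matrix m n ℂ) :
    (A.map ofReal * E).map re = A * E.map re := by
  ext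
  simp [Matrix.mul_apply]

lemma map_im_map_ofReal_mul [Fintype m] (A : Matrix l m ℝ) (E : Matrix m n ℂ) :
    (A.map ofReal * E).map im = A * E.map im := by
  ext
  simp [Matrix.mul_apply]

lemma transpose_add_conjTranspose (E : Matrix m n ℂ) :
    Eᵀ + Eᴴ = (2 : ℂ) • (E.map re)ᵀ.map ofReal := by
  ext i j
  simp [add_conj]

lemma transpose_sub_conjTranspose (E : Matrix m n ℂ) :
    Eᵀ - Eᴴ = (2 * I) • (E.map im)ᵀ.map ofReal := by
  ext i j
  simp [sub_conj, mul_comm, mul_left_comm]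

end RealAndImaginaryParts

section SymplecticFrames

lemma isHermitian_inv_two_mul_I_smul_J (l : Type*) [DecidableEq l] :
    ((2 * I)⁻¹ • J l ℂ).IsHermitian := by
  ext (i | i) (j | j) <;> simp [J, Matrix.one_apply, eq_comm, apply_ite]

variable {l : Type*} [Fintype l] [DecidableEq l]

lemma map_ofReal_mul_J {m : Type*} (A : Matrix m (l ⊕ l) ℝ) :
    (A * J l ℝ).map ofReal = A.map ofReal * J l ℂ := by
  rw [← map_J l ofRealHom]
  exact Matrix.map_mul (f := ofRealHom)

/-- A basis, given by the columns of a matrix, of a Lagrangian subspace of `ℂ^{2l}`, orthonormal for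
the Hermitian form `(2i)⁻¹ J`. The factor 2 makes the real and imaginary parts of the columns a
real symplectic basis. -/
structure IsUnitaryLagrangianFrame (E : Matrix (l ⊕ l) l ℂ) : Prop where
  isotropic : Eᵀ * J l ℂ * E = 0
  unitary : Eᴴ * J l ℂ * E = (2 * I) • 1

namespace IsUnitaryLagrangianFrame

variable {E : Matrix (l ⊕ l) l ℂ}

lemma re_transpose_mul_J_mul (hE : IsUnitaryLagrangianFrame E) :
    ((E.map re)ᵀ * J l ℝ).map ofReal * E = I • 1 := by
  have h := congrArg (· * J l ℂ * E) (transpose_add_conjTranspose E)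
  simp only [Matrix.add_mul, Matrix.smul_mul, hE.isotropic, hE.unitary, zero_add, mul_smul] at h
  rw [map_ofReal_mul_J]
  exact (smul_right_injective _ two_ne_zero h).symm

lemma im_transpose_mul_J_mul (hE : IsUnitaryLagrangianFrame E) :
    ((E.map im)ᵀ * J l ℝ).map ofReal * E = -1 := by
  have h := congrArg (· * J l ℂ * E) (transpose_sub_conjTranspose E)
  simp only [Matrix.sub_mul, Matrix.smul_mul, hE.isotropic, hE.unitary, zero_sub] at h
  rw [map_ofReal_mul_J]
  exact (smul_right_injective _ (mul_ne_zero two_ne_zero I_ne_zero) ((smul_neg _ _).trans h)).symm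

theorem fromCols_im_re_mem_symplecticGroup (hE : IsUnitaryLagrangianFrame E) :
    fromCols (E.map im) (E.map re) ∈ symplecticGroup l ℝ := by
  have hXX : (E.map re)ᵀ * J l ℝ * E.map re = 0 := by
    rw [← map_re_map_ofReal_mul, hE.re_transpose_mul_J_mul]
    ext i j
    simp [Matrix.one_apply, apply_ite]
  have hXY : (E.map re)ᵀ * J l ℝ * E.map im = 1 := by
    rw [← map_im_map_ofReal_mul, hE.re_transpose_mul_J_mul]
    ext i j
    simp [Matrix.one_apply, apply_ite]
  have hYX : (E.map im)ᵀ * J l ℝ * E.map re = -1 := by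
    rw [← map_re_map_ofReal_mul, hE.im_transpose_mul_J_mul]
    ext i j
    simp [Matrix.one_apply, apply_ite]
  have hYY : (E.map im)ᵀ * J l ℝ * E.map im = 0 := by
    rw [← map_im_map_ofReal_mul, hE.im_transpose_mul_J_mul]
    ext i j
    simp [Matrix.one_apply, apply_ite]
  rw [SymplecticGroup.mem_iff', transpose_fromCols, fromRows_mul, fromRows_mul_fromCols,
    hYY, hYX, hXY, hXX, J]

end IsUnitaryLagrangianFrame

variable (l) in
/-- The frame `[i; 1]` of the base point of `D_Ψ`, which corresponds to the point `i` of the Siegel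
upper half-space. -/
def stdFrame : Matrix (l ⊕ l) l ℂ := fromRows (I • 1) 1

lemma fromCols_im_re_map_ofReal_mul_stdFrame (E : Matrix (l ⊕ l) l ℂ) :
    (fromCols (E.map im) (E.map re)).map ofReal * stdFrame l = E := by
  rw [stdFrame, fromCols_map, fromCols_mul_fromRows]
  ext i j
  simp [mul_comm I, add_comm, re_add_im]

end SymplecticFrames

section Transitivity

variable {d : ℕ}

lemma omegaC_eq_dotProduct_J_mulVec (x y : Vd d) : omegaC d x y = x ⬝ᵥ J (Fin d) ℂ *ᵥ y := by
  rw [← map_J (Fin d) ofRealHom]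
  rfl

lemma star_dotProduct_inv_two_mul_I_smul_J_mulVec (v : Vd d) :
    star v ⬝ᵥ ((2 * I)⁻¹ • J (Fin d) ℂ) *ᵥ v = 2⁻¹ * (I * omegaC d v (star v)) := by
  have hskew : star v ⬝ᵥ J (Fin d) ℂ *ᵥ v = -omegaC d v (star v) := by
    rw [omegaC_eq_dotProduct_J_mulVec, dotProduct_mulVec, ← mulVec_transpose, J_transpose,
      neg_mulVec, neg_dotProduct, dotProduct_comm]
  rw [smul_mulVec, dotProduct_smul, hskew, smul_eq_mul, mul_inv, inv_I]
  ring

lemma exists_isUnitaryLagrangianFrame_range_eq {F : Submodule ℂ (Vd d)} (hF : F ∈ DPsi d) :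
    ∃ E : Matrix (Fin d ⊕ Fin d) (Fin d) ℂ,
      IsUnitaryLagrangianFrame E ∧ LinearMap.range E.mulVecLin = F := by
  obtain ⟨hdim, hiso, hpos⟩ := hF
  have hpos' (v : Vd d) (hv : v ∈ F) (hv0 : v ≠ 0) :
      0 < star v ⬝ᵥ ((2 * I)⁻¹ • J (Fin d) ℂ) *ᵥ v := by
    obtain ⟨r, hr, hrv⟩ := hpos v hv hv0
    rw [star_dotProduct_inv_two_mul_I_smul_J_mulVec]
    exact mul_pos (by simp) (hrv ▸ zero_lt_real.mpr hr)
  obtain ⟨E, rfl, hE⟩ := exists_range_eq_and_conjTranspose_mul_mul_eq_one (n := Fin d)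
    (isHermitian_inv_two_mul_I_smul_J _) F (by simpa using hdim) hpos'
  refine ⟨E, ⟨transpose_mul_mul_eq_zero_of_forall_mem_range fun x hx y hy ↦ ?_, ?_⟩, rfl⟩
  · rw [← omegaC_eq_dotProduct_J_mulVec, hiso x hx y hy]
  · rw [← hE, Matrix.mul_smul, Matrix.smul_mul, smul_inv_smul₀ (by simp)]

theorem exists_symplecticGroup_map_range_stdFrame_eq {F : Submodule ℂ (Vd d)} (hF : F ∈ DPsi d) :
    ∃ G : symplecticGroup (Fin d) ℝ,
      (LinearMap.range (stdFrame (Fin d)).mulVecLin).map (G.1.map ofReal).mulVecLin = F := by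
  obtain ⟨E, hE, rfl⟩ := exists_isUnitaryLagrangianFrame_range_eq hF
  refine ⟨⟨_, hE.fromCols_im_re_mem_symplecticGroup⟩, ?_⟩
  rw [← LinearMap.range_comp, ← mulVecLin_mul, fromCols_im_re_map_ofReal_mul_stdFrame]

end Transitivity

/-- Transitivity of the action of `Sp(Ψ)(ℝ)` on `D_Ψ` (Section 4.2): for all
`F, F' ∈ D_Ψ` there is a real matrix `g` with `gᵀ·J·g = J` whose ℂ-linear extension
maps `F` onto `F'`. -/
theorem sp_transitive_on_DPsi (d : ℕ) (hd : 1 ≤ d)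
    (F F' : Submodule ℂ (Vd d)) (hF : F ∈ DPsi d) (hF' : F' ∈ DPsi d) :
    ∃ g : Matrix (Fin d ⊕ Fin d) (Fin d ⊕ Fin d) ℝ,
      gᵀ * Jmat d * g = Jmat d ∧
      Submodule.map ((g.map fun r : ℝ => (r : ℂ)).mulVecLin) F = F' := by
  obtain ⟨G, rfl⟩ := exists_symplecticGroup_map_range_stdFrame_eq hF
  obtain ⟨G', rfl⟩ := exists_symplecticGroup_map_range_stdFrame_eq hF'
  refine ⟨(G' * G⁻¹).1, SymplecticGroup.mem_iff'.mp (G' * G⁻¹).2, ?_⟩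
  have hG := calc
    (G' * G⁻¹).1.map ofReal * G.1.map ofReal = (G' * G⁻¹ * G).1.map ofReal :=
      (Matrix.map_mul (f := ofRealHom)).symm
    _ = G'.1.map ofReal := by rw [inv_mul_cancel_right]
  rw [← Submodule.map_comp, ← mulVecLin_mul, hG]
end
end

section
/- Let g ∈ M_{2d}(ℝ) and μ > 0 be such that gᵀ·J·g = μ·J. Then for every F ∈ D_Ψ, the image of F under the ℂ-linear extension of g belongs to D_Ψ. (This is the claim of Section 4.2 of the paper that GSp_Ψ(ℝ)⁺ acts on D_Ψ.) -/
/-!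
The relation `gᵀ * J * g = μ • J` says that `g` multiplies the form `ω` by `μ`. Since `J` and `μ`
are invertible, so is `g`, and the dimension of `F` is preserved. Isotropy survives multiplication
of `ω` by any scalar. As `g` is real it commutes with complex conjugation, so `i ω(v, v̄)` is
multiplied by `μ` as well, and it stays positive because `μ > 0`.
-/

open Matrix Complex

noncomputable section

/-- `g` is a similitude, with multiplier `μ`, of the bilinear form with Gram matrix `A`. For `A = J`
and `μ > 0` these are the elements of `GSp_Ψ(ℝ)⁺`; invertibility of `g` is not part of the
definition. -/
def IsSimilitude {n R : Type*} [Fintype n] [CommSemiring R] (A : Matrix n n R) (μ : R)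
    (g : Matrix n n R) : Prop :=
  gᵀ * A * g = μ • A

namespace IsSimilitude

variable {n R : Type*} [Fintype n] [CommSemiring R] {A g : Matrix n n R} {μ : R}

theorem map {S : Type*} [CommSemiring S] (h : IsSimilitude A μ g) (f : R →+* S) :
    IsSimilitude (A.map f) (f μ) (g.map f) := by
  rw [IsSimilitude, ← transpose_map, ← Matrix.map_mul, ← Matrix.map_mul, h,
    Matrix.map_smul' _ _ _ (map_mul f)]

theorem mulVec_dotProduct_mulVec (h : IsSimilitude A μ g) (x y : n → R) :
    (g *ᵥ x) ⬝ᵥ (A *ᵥ (g *ᵥ y)) = μ * (x ⬝ᵥ (A *ᵥ y)) :=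
  calc (g *ᵥ x) ⬝ᵥ (A *ᵥ (g *ᵥ y))
      = x ⬝ᵥ ((gᵀ * A * g) *ᵥ y) := by
        rw [← mulVec_mulVec, ← mulVec_mulVec, dotProduct_mulVec x, vecMul_transpose]
    _ = μ * (x ⬝ᵥ (A *ᵥ y)) := by
        rw [h, smul_mulVec, dotProduct_smul, smul_eq_mul]

theorem isUnit [DecidableEq n] (h : IsSimilitude A μ g) (hA : IsUnit A) (hμ : IsUnit μ) :
    IsUnit g := by
  have hμA : IsUnit (μ • A) := by
    rw [Algebra.smul_def]
    exact (hμ.map _).mul hA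
  rw [← h] at hμA
  exact isUnit_of_mul_isUnit_right hμA

end IsSimilitude

theorem isUnit_Jmat (d : ℕ) : IsUnit (Jmat d) :=
  (isUnit_iff_isUnit_det _).2 (isUnit_det_J (Fin d) ℝ)

theorem omegaC_mulVec_mulVec {d : ℕ} {g : Matrix (Fin d ⊕ Fin d) (Fin d ⊕ Fin d) ℝ} {μ : ℝ}
    (h : IsSimilitude (Jmat d) μ g) (x y : Vd d) :
    omegaC d ((g.map fun r : ℝ => (r : ℂ)) *ᵥ x) ((g.map fun r : ℝ => (r : ℂ)) *ᵥ y) =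
      μ * omegaC d x y :=
  (h.map ofRealHom).mulVec_dotProduct_mulVec x y

theorem conj_map_ofReal_mulVec {m n : Type*} [Fintype n] (g : Matrix m n ℝ) (v : n → ℂ) :
    (fun i => (starRingEnd ℂ) (((g.map fun r : ℝ => (r : ℂ)) *ᵥ v) i)) =
      (g.map fun r : ℝ => (r : ℂ)) *ᵥ fun i => (starRingEnd ℂ) (v i) := by
  have hg : (g.map fun r : ℝ => (r : ℂ)).map (starRingEnd ℂ) = g.map fun r : ℝ => (r : ℂ) := by
    ext i j
    exact conj_ofReal (g i j)
  funext i
  rw [RingHom.map_mulVec, hg]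
  rfl

theorem finrank_map_mulVecLin_of_isUnit {n R : Type*} [Fintype n] [DecidableEq n] [CommSemiring R]
    {g : Matrix n n R} (hg : IsUnit g) (F : Submodule R (n → R)) :
    Module.finrank R (F.map g.mulVecLin) = Module.finrank R F :=
  (F.equivMapOfInjective g.mulVecLin (mulVec_injective_of_isUnit hg)).finrank_eq.symm

/-- Section 4.2: the group `GSp_Ψ(ℝ)⁺` acts on `D_Ψ`: if `g` is a real matrix and
`μ > 0` with `gᵀ·J·g = μ·J`, then for every `F ∈ D_Ψ` the image of `F` under the
ℂ-linear extension of `g` again belongs to `D_Ψ`. -/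
theorem gsp_acts_on_DPsi (d : ℕ) (hd : 1 ≤ d)
    (g : Matrix (Fin d ⊕ Fin d) (Fin d ⊕ Fin d) ℝ) (μ : ℝ) (hμ : 0 < μ)
    (hg : gᵀ * Jmat d * g = μ • Jmat d)
    (F : Submodule ℂ (Vd d)) (hF : F ∈ DPsi d) :
    Submodule.map ((g.map fun r : ℝ => (r : ℂ)).mulVecLin) F ∈ DPsi d := by
  obtain ⟨hdim, hiso, hpos⟩ := hF
  have hsim : IsSimilitude (Jmat d) μ g := hg
  have hunit : IsUnit (g.map fun r : ℝ => (r : ℂ)) :=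
    (hsim.isUnit (isUnit_Jmat d) hμ.ne'.isUnit).map ofRealHom.mapMatrix
  refine ⟨(finrank_map_mulVecLin_of_isUnit hunit F).trans hdim, ?isotropic, ?positive⟩
  case isotropic =>
    rintro _ ⟨x, hx, rfl⟩ _ ⟨y, hy, rfl⟩
    rw [mulVecLin_apply, mulVecLin_apply, omegaC_mulVec_mulVec hsim, hiso x hx y hy, mul_zero]
  case positive =>
    rintro _ ⟨v, hv, rfl⟩ hgv
    have hv0 : v ≠ 0 := by
      rintro rfl
      exact hgv (map_zero _)
    obtain ⟨r, hr, hωr⟩ := hpos v hv hv0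
    refine ⟨μ * r, mul_pos hμ hr, ?_⟩
    rw [mulVecLin_apply, conj_map_ofReal_mulVec, omegaC_mulVec_mulVec hsim, mul_left_comm, hωr,
      ofReal_mul]
end
end

section
/- Let τ ∈ M_d(ℂ), u, x₁, x₂ ∈ M_{1,d}(ℂ), v, y₁, y₂ ∈ M_{d,1}(ℂ), and w, z ∈ ℂ. Let N ∈ M_{2d+2}(ℂ) be the block matrix [[1, 2πi·x₁, 2πi·x₂, 2πi·z],[0, 1_d, 0, y₁],[0, 0, 1_d, y₂],[0, 0, 0, 1]]. Then N·S(τ,u,v,w) = S(τ, u', v', w') where u' = u + 2πi·x₁·τ + 2πi·x₂, v' = v + y₁ − τ·y₂, and w' = w + 2πi·x₁·v + 2πi·z − u'·y₂. (This is the explicit formula, equation (11) of the paper, for the action of the unipotent group P^u(ℝ)U(ℂ) on the parameter space D.) -/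
/-!
Let `Z` be the block matrix spanning `S(τ,u,v,w)`. The bottom block rows of `N * Z` are those of
`G = [[1, y₂], [0, 1]]`, so `N * Z * G⁻¹` is again normalised and therefore of the form `Z'`, with
parameters `(τ, u', v', w')` read off from its top block rows. Since `G` is invertible, `N * Z` and
`Z'` have the same column span.
-/

open Matrix Complex

noncomputable section

/-- Index set for `ℂ^{2d+2}`. -/
abbrev Idx (d : ℕ) := Unit ⊕ ((Fin d ⊕ Fin d) ⊕ Unit)

/-- `ℂ^{2d+2}`. -/
abbrev V2 (d : ℕ) := Idx d → ℂ

/-- The `(2d+2) × (d+1)` block matrix with block rows `(u, w)`, `(τ, v)`, `(1_d, 0)`,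
`(0, 1)`. -/
def colMat (d : ℕ) (τ : Matrix (Fin d) (Fin d) ℂ) (u : Fin d → ℂ) (v : Fin d → ℂ)
    (w : ℂ) : Matrix (Idx d) (Fin d ⊕ Unit) ℂ :=
  Matrix.of fun i k =>
    match i, k with
    | Sum.inl _, Sum.inl j => u j
    | Sum.inl _, Sum.inr _ => w
    | Sum.inr (Sum.inl (Sum.inl i)), Sum.inl j => τ i j
    | Sum.inr (Sum.inl (Sum.inl i)), Sum.inr _ => v i
    | Sum.inr (Sum.inl (Sum.inr i)), Sum.inl j => if i = j then 1 else 0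
    | Sum.inr (Sum.inl (Sum.inr _)), Sum.inr _ => 0
    | Sum.inr (Sum.inr _), Sum.inl _ => 0
    | Sum.inr (Sum.inr _), Sum.inr _ => 1

/-- `S(τ,u,v,w)`: the column span of the above block matrix. -/
def Smod (d : ℕ) (τ : Matrix (Fin d) (Fin d) ℂ) (u : Fin d → ℂ) (v : Fin d → ℂ)
    (w : ℂ) : Submodule ℂ (V2 d) :=
  LinearMap.range (colMat d τ u v w).mulVecLin

/-- The block matrix
`N = [[1, 2πi·x₁, 2πi·x₂, 2πi·z],[0, 1_d, 0, y₁],[0, 0, 1_d, y₂],[0, 0, 0, 1]]`. -/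
def Nmat (d : ℕ) (x₁ x₂ : Fin d → ℂ) (y₁ y₂ : Fin d → ℂ) (z : ℂ) :
    Matrix (Idx d) (Idx d) ℂ :=
  Matrix.of fun i k =>
    match i, k with
    | Sum.inl _, Sum.inl _ => 1
    | Sum.inl _, Sum.inr (Sum.inl (Sum.inl j)) => twoPiI * x₁ j
    | Sum.inl _, Sum.inr (Sum.inl (Sum.inr j)) => twoPiI * x₂ j
    | Sum.inl _, Sum.inr (Sum.inr _) => twoPiI * z
    | Sum.inr (Sum.inl (Sum.inl i)), Sum.inr (Sum.inl (Sum.inl j)) =>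
        if i = j then 1 else 0
    | Sum.inr (Sum.inl (Sum.inl i)), Sum.inr (Sum.inr _) => y₁ i
    | Sum.inr (Sum.inl (Sum.inr i)), Sum.inr (Sum.inl (Sum.inr j)) =>
        if i = j then 1 else 0
    | Sum.inr (Sum.inl (Sum.inr i)), Sum.inr (Sum.inr _) => y₂ i
    | Sum.inr (Sum.inr _), Sum.inr (Sum.inr _) => 1
    | _, _ => 0

section BlockMatrices

variable {k m n p q R : Type*}

theorem fromCols_add_fromCols [Add R] (A₁ B₁ : Matrix m n R) (A₂ B₂ : Matrix m k R) :
    fromCols A₁ A₂ + fromCols B₁ B₂ = fromCols (A₁ + B₁) (A₂ + B₂) := by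
  ext i (j | j) <;> rfl

theorem range_mulVecLin_mul_of_surjective [CommSemiring R] [Fintype n] [Fintype k]
    (A : Matrix m n R) {B : Matrix n k R} (hB : Function.Surjective B.mulVec) :
    LinearMap.range (A * B).mulVecLin = LinearMap.range A.mulVecLin := by
  rw [mulVecLin_mul]
  exact LinearMap.range_comp_of_range_eq_top _ (LinearMap.range_eq_top.2 hB)

variable [DecidableEq m] [DecidableEq q]

/-- The block matrix `[[1, y], [0, 1]]`, acting on the right of a matrix with two block columns by
adding the first block column, multiplied by `y`, to the second. -/
def shearMatrix [Zero R] [One R] (y : Matrix m q R) : Matrix (m ⊕ q) (m ⊕ q) R :=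
  fromBlocks 1 y 0 1

/-- The block matrix with block rows `(u, w)`, `(τ, v)`, `(1, 0)`, `(0, 1)`, that is, `colMat` with
blocks of arbitrary size. -/
def pointMatrix [Zero R] [One R] (τ : Matrix n m R) (u : Matrix p m R) (v : Matrix n q R)
    (w : Matrix p q R) : Matrix (p ⊕ ((n ⊕ m) ⊕ q)) (m ⊕ q) R :=
  fromRows (fromCols u w) (fromRows (fromBlocks τ v 1 0) (fromCols 0 1))

/-- The unipotent block matrix `[[1, a, b, c], [0, 1, 0, y₁], [0, 0, 1, y₂], [0, 0, 0, 1]]`, that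
is, `Nmat` with blocks of arbitrary size and the factor `2πi` absorbed in `a`, `b` and `c`. -/
def unipotentMatrix [Zero R] [One R] [DecidableEq n] [DecidableEq p] (a : Matrix p n R)
    (b : Matrix p m R) (c : Matrix p q R) (y₁ : Matrix n q R) (y₂ : Matrix m q R) :
    Matrix (p ⊕ ((n ⊕ m) ⊕ q)) (p ⊕ ((n ⊕ m) ⊕ q)) R :=
  fromBlocks 1 (fromCols (fromCols a b) c) 0 (fromBlocks 1 (fromRows y₁ y₂) 0 1)

theorem isUnit_shearMatrix [CommRing R] [Fintype m] [Fintype q] (y : Matrix m q R) :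
    IsUnit (shearMatrix y) :=
  isUnit_fromBlocks_zero₂₁.2 ⟨isUnit_one, isUnit_one⟩

theorem pointMatrix_mul_shearMatrix [Semiring R] [Fintype m] [Fintype q] (τ : Matrix n m R)
    (u : Matrix p m R) (v : Matrix n q R) (w : Matrix p q R) (y : Matrix m q R) :
    pointMatrix τ u v w * shearMatrix y =
      fromRows (fromCols u (u * y + w))
        (fromRows (fromBlocks τ (τ * y + v) 1 y) (fromCols 0 1)) := by
  simp [pointMatrix, shearMatrix, fromCols_mul_fromBlocks, fromBlocks_multiply]

theorem unipotentMatrix_mul_pointMatrix [Semiring R] [DecidableEq n] [DecidableEq p]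
    [Fintype m] [Fintype n] [Fintype p] [Fintype q] (τ : Matrix n m R) (u : Matrix p m R)
    (v : Matrix n q R) (w : Matrix p q R) (a : Matrix p n R) (b : Matrix p m R)
    (c : Matrix p q R) (y₁ : Matrix n q R) (y₂ : Matrix m q R) :
    unipotentMatrix a b c y₁ y₂ * pointMatrix τ u v w =
      fromRows (fromCols (u + a * τ + b) (w + a * v + c))
        (fromRows (fromBlocks τ (v + y₁) 1 y₂) (fromCols 0 1)) := by
  rw [unipotentMatrix, pointMatrix, fromBlocks_mul_fromRows, fromBlocks_mul_fromRows,
    fromRows_mul_fromCols, fromCols_mul_fromRows, fromCols_mul_fromBlocks]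
  simp [fromBlocks_add, fromCols_add_fromCols, add_assoc]

theorem unipotentMatrix_mul_pointMatrix_eq_mul_shearMatrix [Ring R] [DecidableEq n]
    [DecidableEq p] [Fintype m] [Fintype n] [Fintype p] [Fintype q] (τ : Matrix n m R)
    (u : Matrix p m R) (v : Matrix n q R) (w : Matrix p q R) (a : Matrix p n R)
    (b : Matrix p m R) (c : Matrix p q R) (y₁ : Matrix n q R) (y₂ : Matrix m q R) :
    unipotentMatrix a b c y₁ y₂ * pointMatrix τ u v w =
      pointMatrix τ (u + a * τ + b) (v + y₁ - τ * y₂)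
        (w + a * v + c - (u + a * τ + b) * y₂) * shearMatrix y₂ := by
  rw [unipotentMatrix_mul_pointMatrix, pointMatrix_mul_shearMatrix, add_sub_cancel,
    add_sub_cancel]

theorem unipotent_action_formula_general [CommRing R] [DecidableEq n] [DecidableEq p]
    [Fintype m] [Fintype n] [Fintype p] [Fintype q] (τ : Matrix n m R) (u : Matrix p m R)
    (v : Matrix n q R) (w : Matrix p q R) (a : Matrix p n R) (b : Matrix p m R)
    (c : Matrix p q R) (y₁ : Matrix n q R) (y₂ : Matrix m q R) :
    Submodule.map (unipotentMatrix a b c y₁ y₂).mulVecLin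
        (LinearMap.range (pointMatrix τ u v w).mulVecLin) =
      LinearMap.range (pointMatrix τ (u + a * τ + b) (v + y₁ - τ * y₂)
        (w + a * v + c - (u + a * τ + b) * y₂)).mulVecLin := by
  rw [← LinearMap.range_comp, ← mulVecLin_mul,
    unipotentMatrix_mul_pointMatrix_eq_mul_shearMatrix]
  exact range_mulVecLin_mul_of_surjective _
    (mulVec_surjective_iff_isUnit.2 (isUnit_shearMatrix y₂))

end BlockMatrices

theorem colMat_eq_pointMatrix (d : ℕ) (τ : Matrix (Fin d) (Fin d) ℂ) (u v : Fin d → ℂ) (w : ℂ) :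
    colMat d τ u v w =
      pointMatrix τ (replicateRow Unit u) (replicateCol Unit v) (of fun _ _ => w) := by
  ext (_ | (_ | _) | _) (_ | _) <;> simp [colMat, pointMatrix, one_apply]

theorem Nmat_eq_unipotentMatrix (d : ℕ) (x₁ x₂ y₁ y₂ : Fin d → ℂ) (z : ℂ) :
    Nmat d x₁ x₂ y₁ y₂ z =
      unipotentMatrix (replicateRow Unit (twoPiI • x₁)) (replicateRow Unit (twoPiI • x₂))
        (of fun _ _ => twoPiI * z) (replicateCol Unit y₁) (replicateCol Unit y₂) := by
  ext (_ | (_ | _) | _) (_ | (_ | _) | _) <;> simp [Nmat, unipotentMatrix, one_apply]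

/-- Equation (11): the explicit formula for the action of the unipotent group on the
parameter space `D`: `N·S(τ,u,v,w) = S(τ,u',v',w')` with
`u' = u + 2πi·x₁·τ + 2πi·x₂`, `v' = v + y₁ − τ·y₂`, and
`w' = w + 2πi·x₁·v + 2πi·z − u'·y₂`. -/
theorem unipotent_action_formula (d : ℕ)
    (τ : Matrix (Fin d) (Fin d) ℂ) (u : Fin d → ℂ) (v : Fin d → ℂ) (w : ℂ)
    (x₁ x₂ : Fin d → ℂ) (y₁ y₂ : Fin d → ℂ) (z : ℂ) :
    Submodule.map (Nmat d x₁ x₂ y₁ y₂ z).mulVecLin (Smod d τ u v w) =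
      Smod d τ
        (u + twoPiI • (x₁ ᵥ* τ) + twoPiI • x₂)
        (v + y₁ - τ *ᵥ y₂)
        (w + twoPiI * (x₁ ⬝ᵥ v) + twoPiI * z -
          (u + twoPiI • (x₁ ᵥ* τ) + twoPiI • x₂) ⬝ᵥ y₂) := by
  rw [← smul_vecMul, ← smul_eq_mul twoPiI (x₁ ⬝ᵥ v), ← smul_dotProduct]
  simp only [Smod, colMat_eq_pointMatrix, Nmat_eq_unipotentMatrix, unipotent_action_formula_general]
  -- Products of one-row and one-column blocks unfold to `ᵥ*`, `*ᵥ` and `⬝ᵥ`.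
  rfl
end
end

section
/- Let τ ∈ M_d(ℂ), u ∈ M_{1,d}(ℂ), v ∈ M_{d,1}(ℂ), w ∈ ℂ, let μ ∈ ℂ be nonzero, and let a, b, c, e ∈ M_d(ℂ) be such that c·τ + e is invertible. Let M ∈ M_{2d+2}(ℂ) be the block matrix [[μ, 0, 0, 0],[0, a, b, 0],[0, c, e, 0],[0, 0, 0, 1]]. Then M·S(τ,u,v,w) = S(τ₁, u₁, v₁, w₁) where τ₁ = (a·τ + b)·(c·τ + e)^{-1}, u₁ = μ·u·(c·τ + e)^{-1}, v₁ = a·v − τ₁·c·v, and w₁ = μ·w − u₁·c·v. (This is the explicit formula, equation (12) of the paper, for the action of GSp_Ψ(ℝ)⁺ on the parameter space D.) -/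
open Matrix Complex

noncomputable section

/-- The block matrix `M = [[μ,0,0,0],[0,a,b,0],[0,c,e,0],[0,0,0,1]]`. -/
def Mmat (d : ℕ) (μ : ℂ) (a b c e : Matrix (Fin d) (Fin d) ℂ) :
    Matrix (Idx d) (Idx d) ℂ :=
  Matrix.of fun i k =>
    match i, k with
    | Sum.inl _, Sum.inl _ => μ
    | Sum.inr (Sum.inl (Sum.inl i)), Sum.inr (Sum.inl (Sum.inl j)) => a i j
    | Sum.inr (Sum.inl (Sum.inl i)), Sum.inr (Sum.inl (Sum.inr j)) => b i j
    | Sum.inr (Sum.inl (Sum.inr i)), Sum.inr (Sum.inl (Sum.inl j)) => c i j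
    | Sum.inr (Sum.inl (Sum.inr i)), Sum.inr (Sum.inl (Sum.inr j)) => e i j
    | Sum.inr (Sum.inr _), Sum.inr (Sum.inr _) => 1
    | _, _ => 0

/-!
Let `P` be the block matrix spanning `S(τ,u,v,w)`. In the positions of the last two block rows of
`P`, which form an identity matrix, `M * P` has the rows `G = [[c * τ + e, c * v], [0, 1]]`, and `G`
is invertible because `c * τ + e` is. The column span of `M * P` is therefore that of `M * P * G⁻¹`,
whose last two block rows again form an identity matrix; its first two are the new parameters.
-/

section ColumnSpan

variable {R l m n : Type*} [CommRing R] [Fintype l] [Fintype n] [DecidableEq n]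

theorem map_range_mulVecLin_of_mul_eq_mul {M : Matrix m l R} {P : Matrix l n R}
    {Q : Matrix m n R} {G : Matrix n n R} (hG : IsUnit G) (h : M * P = Q * G) :
    (LinearMap.range P.mulVecLin).map M.mulVecLin = LinearMap.range Q.mulVecLin := by
  have range_G : LinearMap.range G.mulVecLin = ⊤ :=
    LinearMap.range_eq_top.2 (mulVec_surjective_iff_isUnit.2 hG)
  rw [← LinearMap.range_comp, ← mulVecLin_mul, h, mulVecLin_mul,
    LinearMap.range_comp_of_range_eq_top _ range_G]

end ColumnSpan

section BlockMatrices

variable {R k l m n : Type*} [CommRing R]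

/-- The matrix with block rows `(u, w)`, `(τ, v)`, `(1, 0)`, `(0, 1)`, for parameter blocks of
arbitrary sizes over a commutative ring. The nesting of its row index is that of `Idx`. -/
def parameterMatrix [DecidableEq k] [DecidableEq n] (τ : Matrix m n R) (u : Matrix l n R)
    (v : Matrix m k R) (w : Matrix l k R) : Matrix (l ⊕ ((m ⊕ n) ⊕ k)) (n ⊕ k) R :=
  fromRows (fromCols u w) (fromRows (fromBlocks τ v 1 0) (fromCols 0 1))

variable (k) in
/-- The block diagonal matrix `diag(μ, [[a, b], [c, e]], 1)`, which acts on the column spans of the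
matrices `parameterMatrix τ u v w`. The scalar `μ` of `Mmat` becomes a square matrix. -/
def similitudeMatrix [DecidableEq k] (μ : Matrix l l R) (a : Matrix m m R) (b : Matrix m n R)
    (c : Matrix n m R) (e : Matrix n n R) :
    Matrix (l ⊕ ((m ⊕ n) ⊕ k)) (l ⊕ ((m ⊕ n) ⊕ k)) R :=
  fromBlocks μ 0 0 (fromBlocks (fromBlocks a b c e) 0 0 1)

/-- The factor of automorphy: the rows that
`similitudeMatrix k μ a b c e * parameterMatrix τ u v w` has in the positions of the block rows
`(1, 0)` and `(0, 1)` of `parameterMatrix τ u v w`. -/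
def automorphyFactor [DecidableEq k] [Fintype m] (c : Matrix n m R) (e : Matrix n n R)
    (τ : Matrix m n R) (v : Matrix m k R) : Matrix (n ⊕ k) (n ⊕ k) R :=
  fromBlocks (c * τ + e) (c * v) 0 1

variable [DecidableEq k] [DecidableEq n] [Fintype k] [Fintype m] [Fintype n]

theorem isUnit_automorphyFactor {c : Matrix n m R} {e : Matrix n n R} {τ : Matrix m n R}
    (hce : IsUnit (c * τ + e)) (v : Matrix m k R) : IsUnit (automorphyFactor c e τ v) :=
  isUnit_fromBlocks_zero₂₁.2 ⟨hce, isUnit_one⟩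

variable [Fintype l]

theorem similitudeMatrix_mul_parameterMatrix (μ : Matrix l l R) (a : Matrix m m R)
    (b : Matrix m n R) {c : Matrix n m R} {e : Matrix n n R} {τ : Matrix m n R} (u : Matrix l n R)
    (v : Matrix m k R) (w : Matrix l k R) (hce : IsUnit (c * τ + e)) :
    similitudeMatrix k μ a b c e * parameterMatrix τ u v w =
      parameterMatrix ((a * τ + b) * (c * τ + e)⁻¹)
        (μ * u * (c * τ + e)⁻¹)
        (a * v - (a * τ + b) * (c * τ + e)⁻¹ * (c * v))
        (μ * w - μ * u * (c * τ + e)⁻¹ * (c * v)) * automorphyFactor c e τ v := by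
  have inv_mul : (c * τ + e)⁻¹ * (c * τ + e) = 1 :=
    nonsing_inv_mul _ ((isUnit_iff_isUnit_det _).1 hce)
  calc similitudeMatrix k μ a b c e * parameterMatrix τ u v w
    _ = fromRows (fromCols (μ * u) (μ * w))
          (fromRows (fromBlocks (a * τ + b) (a * v) (c * τ + e) (c * v)) (fromCols 0 1)) := by
      simp [similitudeMatrix, parameterMatrix, fromBlocks_mul_fromRows, fromBlocks_multiply]
    _ = _ := by
      simp [parameterMatrix, automorphyFactor, fromCols_mul_fromBlocks, fromBlocks_multiply,
        Matrix.mul_assoc _ _ (c * τ + e), inv_mul]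

theorem gsp_action_formula_general (μ : Matrix l l R) (a : Matrix m m R)
    (b : Matrix m n R) {c : Matrix n m R} {e : Matrix n n R} {τ : Matrix m n R} (u : Matrix l n R)
    (v : Matrix m k R) (w : Matrix l k R) (hce : IsUnit (c * τ + e)) :
    (LinearMap.range (parameterMatrix τ u v w).mulVecLin).map
        (similitudeMatrix k μ a b c e).mulVecLin =
      LinearMap.range (parameterMatrix ((a * τ + b) * (c * τ + e)⁻¹)
        (μ * u * (c * τ + e)⁻¹)
        (a * v - (a * τ + b) * (c * τ + e)⁻¹ * (c * v))
        (μ * w - μ * u * (c * τ + e)⁻¹ * (c * v))).mulVecLin :=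
  map_range_mulVecLin_of_mul_eq_mul (isUnit_automorphyFactor hce v)
    (similitudeMatrix_mul_parameterMatrix μ a b u v w hce)

end BlockMatrices

theorem colMat_eq_parameterMatrix (d : ℕ) (τ : Matrix (Fin d) (Fin d) ℂ) (u v : Fin d → ℂ)
    (w : ℂ) :
    colMat d τ u v w =
      parameterMatrix τ (replicateRow Unit u) (replicateCol Unit v) (of fun _ _ => w) := by
  ext (_ | (_ | _) | _) (_ | _) <;> simp [colMat, parameterMatrix, one_apply]

theorem Mmat_eq_similitudeMatrix (d : ℕ) (μ : ℂ) (a b c e : Matrix (Fin d) (Fin d) ℂ) :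
    Mmat d μ a b c e = similitudeMatrix Unit (μ • (1 : Matrix Unit Unit ℂ)) a b c e := by
  ext (_ | (_ | _) | _) (_ | (_ | _) | _) <;> simp [Mmat, similitudeMatrix]

/-- Equation (12): the explicit formula for the action of `GSp_Ψ(ℝ)⁺` on the
parameter space `D`: if `μ ≠ 0` and `c·τ + e` is invertible, then
`M·S(τ,u,v,w) = S(τ₁,u₁,v₁,w₁)` with `τ₁ = (a·τ+b)·(c·τ+e)⁻¹`,
`u₁ = μ·u·(c·τ+e)⁻¹`, `v₁ = a·v − τ₁·c·v`, and `w₁ = μ·w − u₁·c·v`. -/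
theorem gsp_action_formula (d : ℕ)
    (τ : Matrix (Fin d) (Fin d) ℂ) (u : Fin d → ℂ) (v : Fin d → ℂ) (w : ℂ)
    (μ : ℂ) (hμ : μ ≠ 0) (a b c e : Matrix (Fin d) (Fin d) ℂ)
    (hce : IsUnit (c * τ + e)) :
    Submodule.map (Mmat d μ a b c e).mulVecLin (Smod d τ u v w) =
      Smod d ((a * τ + b) * (c * τ + e)⁻¹)
        (μ • (u ᵥ* (c * τ + e)⁻¹))
        (a *ᵥ v - ((a * τ + b) * (c * τ + e)⁻¹) *ᵥ (c *ᵥ v))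
        (μ * w - (μ • (u ᵥ* (c * τ + e)⁻¹)) ⬝ᵥ (c *ᵥ v)) := by
  -- Products with a single row or column are `ᵥ*`, `*ᵥ` and `⬝ᵥ` by unfolding.
  simp only [Smod, colMat_eq_parameterMatrix, Mmat_eq_similitudeMatrix,
    gsp_action_formula_general _ _ _ _ _ _ hce, Matrix.smul_mul, Matrix.one_mul, smul_dotProduct]
  rfl
end
end
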